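/- arXiv:2601.19147 — 3 statements merged into one kernel-verified Lean document; each statement's English description precedes it below -/
import Mathlib

section
/- Let F ⊆ ℝ² be a closed set such that every axis-parallel segment of length at most 1 whose two endpoints lie in F is contained in F. Let p,q ∈ F and let h ⊆ F be a nondegenerate horizontal closed segment with common y-coordinate y(h) and with minimum and maximum x-coordinates x₁(h) and x₂(h). Let p′ be the point of h at minimum Euclidean distance from p and q′ the point of h at minimum Euclidean distance from q. Suppose: (i) |p₂ − y(h)| ≤ 1 and |q₂ − y(h)| ≤ 1; (ii) there exists a shortest path in F from p to p′ and every shortest path in F from p to p′ is xy-monotone, and likewise there exists a shortest path in F from q to q′ and every shortest path in F from q to q′ is xy-monotone; (iii) max(p₁,q₁) ≥ x₁(h) and min(p₁,q₁) ≤ x₂(h). Then every shortest path in F from p to q is x-monotone. -/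
open Set
open scoped ENNReal

noncomputable section

/-- The ℓ∞ norm of a point of `ℝ²`. -/
def linf (p : ℝ × ℝ) : ℝ := max |p.1| |p.2|

/-- The ℓ₁ norm of a point of `ℝ²`. -/
def l1 (p : ℝ × ℝ) : ℝ := |p.1| + |p.2|

/-- The Euclidean distance between two points of `ℝ²`. -/
def euclDist (p q : ℝ × ℝ) : ℝ := Real.sqrt ((p.1 - q.1) ^ 2 + (p.2 - q.2) ^ 2)

/-- A closed axis-aligned rectangle with nonempty interior. -/
def IsClosedAxisRect (S : Set (ℝ × ℝ)) : Prop :=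
  ∃ a b c d : ℝ, a < b ∧ c < d ∧ S = Icc a b ×ˢ Icc c d

/-- A rectilinear polygonal environment: a nonempty compact subset of the plane that is a
finite union of closed axis-aligned rectangles with nonempty interior, and that equals the
closure of its interior. -/
def IsRectilinearEnv (W : Set (ℝ × ℝ)) : Prop :=
  W.Nonempty ∧ IsCompact W ∧
    (∃ 𝓡 : Finset (Set (ℝ × ℝ)), (∀ S ∈ 𝓡, IsClosedAxisRect S) ∧ W = ⋃ S ∈ 𝓡, S) ∧
    W = closure (interior W)

/-- The free space of a workspace `W`: placements of the center of a closed axis-aligned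
unit square keeping the square inside `W`. -/
def freeSpace (W : Set (ℝ × ℝ)) : Set (ℝ × ℝ) :=
  {p | ∀ q : ℝ × ℝ, linf q ≤ 1 / 2 → p + q ∈ W}

/-- A free configuration of the two robots. -/
def FreeConf (F : Set (ℝ × ℝ)) (c : (ℝ × ℝ) × (ℝ × ℝ)) : Prop :=
  c.1 ∈ F ∧ c.2 ∈ F ∧ 1 ≤ linf (c.1 - c.2)

/-- The ℓ₁-length (total variation w.r.t. the metric induced by the ℓ₁-norm) of a planar
path on a set of times. -/
def l1VarOn (γ : ℝ → ℝ × ℝ) (s : Set ℝ) : ℝ≥0∞ :=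
  eVariationOn (fun t => (WithLp.equiv 1 (ℝ × ℝ)).symm (γ t)) s

/-- An `(s,t)`-plan: a continuous map on `[0,1]` from `s` to `t`. -/
def IsPlan (s t : (ℝ × ℝ) × (ℝ × ℝ)) (pln : ℝ → (ℝ × ℝ) × (ℝ × ℝ)) : Prop :=
  ContinuousOn pln (Icc 0 1) ∧ pln 0 = s ∧ pln 1 = t

/-- A plan is feasible if every configuration along it is free. -/
def Feasible (F : Set (ℝ × ℝ)) (pln : ℝ → (ℝ × ℝ) × (ℝ × ℝ)) : Prop :=
  ∀ lam ∈ Icc (0 : ℝ) 1, FreeConf F (pln lam)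

/-- The cost of a plan: the sum of the ℓ₁-lengths of the two robot paths. -/
def planCost (pln : ℝ → (ℝ × ℝ) × (ℝ × ℝ)) : ℝ≥0∞ :=
  l1VarOn (fun t => (pln t).1) (Icc 0 1) + l1VarOn (fun t => (pln t).2) (Icc 0 1)

/-- An optimal `(s,t)`-plan: feasible, and of cost at most that of every feasible plan. -/
def IsOptimalPlan (F : Set (ℝ × ℝ)) (s t : (ℝ × ℝ) × (ℝ × ℝ))
    (pln : ℝ → (ℝ × ℝ) × (ℝ × ℝ)) : Prop :=
  IsPlan s t pln ∧ Feasible F pln ∧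
    ∀ pln', IsPlan s t pln' → Feasible F pln' → planCost pln ≤ planCost pln'

/-- A decoupled plan: `[0,1]` splits into finitely many subintervals on each of which
one of the two robots is parked. -/
def IsDecoupled (pln : ℝ → (ℝ × ℝ) × (ℝ × ℝ)) : Prop :=
  ∃ (n : ℕ) (τ : ℕ → ℝ), τ 0 = 0 ∧ τ n = 1 ∧ (∀ i, i < n → τ i ≤ τ (i + 1)) ∧
    ∀ i, i < n →
      (∀ a ∈ Icc (τ i) (τ (i + 1)), (pln a).1 = (pln (τ i)).1) ∨
      (∀ a ∈ Icc (τ i) (τ (i + 1)), (pln a).2 = (pln (τ i)).2)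

/-- A rectilinear path: piecewise linear, with every linear piece horizontal or vertical. -/
def IsRectilinearPath (γ : ℝ → ℝ × ℝ) : Prop :=
  ∃ (n : ℕ) (τ : ℕ → ℝ), τ 0 = 0 ∧ τ n = 1 ∧ (∀ i, i < n → τ i ≤ τ (i + 1)) ∧
    ∀ i, i < n → ∃ v : ℝ × ℝ, (v.1 = 0 ∨ v.2 = 0) ∧
      ∀ a ∈ Icc (τ i) (τ (i + 1)), γ a = γ (τ i) + (a - τ i) • v

/-- A rectilinear plan: both robot paths are rectilinear. -/
def IsRectilinearPlan (pln : ℝ → (ℝ × ℝ) × (ℝ × ℝ)) : Prop :=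
  IsRectilinearPath (fun t => (pln t).1) ∧ IsRectilinearPath (fun t => (pln t).2)

/-- An alternating path: horizontal and vertical pieces (possibly of zero length)
alternate. -/
def IsAlternatingPath (γ : ℝ → ℝ × ℝ) : Prop :=
  ∃ (n : ℕ) (τ : ℕ → ℝ) (d : ℕ → Bool), τ 0 = 0 ∧ τ n = 1 ∧
    (∀ i, i < n → τ i ≤ τ (i + 1)) ∧
    (∀ i, i + 1 < n → d (i + 1) = !d i) ∧
    ∀ i, i < n → ∃ v : ℝ × ℝ,
      (if d i = true then v.2 = 0 else v.1 = 0) ∧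
      ∀ a ∈ Icc (τ i) (τ (i + 1)), γ a = γ (τ i) + (a - τ i) • v

/-- An alternating plan. -/
def IsAlternatingPlan (pln : ℝ → (ℝ × ℝ) × (ℝ × ℝ)) : Prop :=
  IsAlternatingPath (fun t => (pln t).1) ∧ IsAlternatingPath (fun t => (pln t).2)

/-- `y` is the height of a horizontal edge of `∂F`. -/
def IsHorizEdgeY (F : Set (ℝ × ℝ)) (y : ℝ) : Prop :=
  ∃ a b : ℝ, a < b ∧ (Icc a b ×ˢ ({y} : Set ℝ)) ⊆ frontier F

/-- `x` is the abscissa of a vertical edge of `∂F`. -/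
def IsVertEdgeX (F : Set (ℝ × ℝ)) (x : ℝ) : Prop :=
  ∃ a b : ℝ, a < b ∧ (({x} : Set ℝ) ×ˢ Icc a b) ⊆ frontier F

/-- `y` is the height of a horizontal `i`-line for some `i ≤ k` (w.r.t. the free space `F`
and the set `P` of the four source/target points). -/
def IsHorizLineY (F : Set (ℝ × ℝ)) (P : Set (ℝ × ℝ)) (k : ℕ) (y : ℝ) : Prop :=
  ∃ i : ℕ, i ≤ k ∧
    ((∃ y₀ : ℝ, IsHorizEdgeY F y₀ ∧ |y - y₀| = (i : ℝ)) ∨ ∃ p ∈ P, |y - p.2| = (i : ℝ))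

/-- `x` is the abscissa of a vertical `i`-line for some `i ≤ k`. -/
def IsVertLineX (F : Set (ℝ × ℝ)) (P : Set (ℝ × ℝ)) (k : ℕ) (x : ℝ) : Prop :=
  ∃ i : ℕ, i ≤ k ∧
    ((∃ x₀ : ℝ, IsVertEdgeX F x₀ ∧ |x - x₀| = (i : ℝ)) ∨ ∃ p ∈ P, |x - p.1| = (i : ℝ))

/-- A grid point: a point of `F` lying on a horizontal grid line and a vertical grid line. -/
def IsGridPoint (F : Set (ℝ × ℝ)) (P : Set (ℝ × ℝ)) (u : ℝ × ℝ) : Prop :=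
  u ∈ F ∧ IsHorizLineY F P 2 u.2 ∧ IsVertLineX F P 2 u.1

/-- A grid edge: a closed segment in `F` joining two grid points on a common grid line, with
no grid point in its relative interior. -/
def IsGridEdge (F P : Set (ℝ × ℝ)) (u v : ℝ × ℝ) : Prop :=
  IsGridPoint F P u ∧ IsGridPoint F P v ∧ (u.1 = v.1 ∨ u.2 = v.2) ∧
    segment ℝ u v ⊆ F ∧ ∀ w ∈ openSegment ℝ u v, ¬ IsGridPoint F P w

/-- A vertex of the configuration graph. -/
def ConfVertex (F P : Set (ℝ × ℝ)) (u : (ℝ × ℝ) × (ℝ × ℝ)) : Prop :=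
  IsGridPoint F P u.1 ∧ IsGridPoint F P u.2 ∧ 1 ≤ linf (u.1 - u.2)

/-- An edge of the configuration graph. -/
def ConfEdge (F P : Set (ℝ × ℝ)) (u v : (ℝ × ℝ) × (ℝ × ℝ)) : Prop :=
  ConfVertex F P u ∧ ConfVertex F P v ∧
    ((u.1 = v.1 ∧ IsGridEdge F P u.2 v.2) ∨ (u.2 = v.2 ∧ IsGridEdge F P u.1 v.1))

/-- A path in `S` from `p` to `q`. -/
def IsPathIn (S : Set (ℝ × ℝ)) (p q : ℝ × ℝ) (γ : ℝ → ℝ × ℝ) : Prop :=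
  ContinuousOn γ (Icc 0 1) ∧ γ 0 = p ∧ γ 1 = q ∧ ∀ t ∈ Icc (0 : ℝ) 1, γ t ∈ S

/-- The ℓ₁-length of a path parameterized over `[0,1]`. -/
def pathLen (γ : ℝ → ℝ × ℝ) : ℝ≥0∞ := l1VarOn γ (Icc 0 1)

/-- A shortest path in `S` from `p` to `q` (w.r.t. ℓ₁-length). -/
def IsShortestPathIn (S : Set (ℝ × ℝ)) (p q : ℝ × ℝ) (γ : ℝ → ℝ × ℝ) : Prop :=
  IsPathIn S p q γ ∧ ∀ γ', IsPathIn S p q γ' → pathLen γ ≤ pathLen γ'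

/-- An x-monotone path. -/
def XMonotone (γ : ℝ → ℝ × ℝ) : Prop :=
  MonotoneOn (fun t => (γ t).1) (Icc 0 1) ∨ AntitoneOn (fun t => (γ t).1) (Icc 0 1)

/-- A y-monotone path. -/
def YMonotone (γ : ℝ → ℝ × ℝ) : Prop :=
  MonotoneOn (fun t => (γ t).2) (Icc 0 1) ∨ AntitoneOn (fun t => (γ t).2) (Icc 0 1)

/-- An xy-monotone path. -/
def XYMonotone (γ : ℝ → ℝ × ℝ) : Prop := XMonotone γ ∧ YMonotone γ

/-- The union of the primary horizontal lines (horizontal 0-lines and 1-lines). -/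
def primaryHorizSet (F P : Set (ℝ × ℝ)) : Set (ℝ × ℝ) :=
  {p | IsHorizLineY F P 1 p.2}

/-- A corridor: the closure of a connected component of `F` minus the primary horizontal
lines. -/
def IsCorridor (F P : Set (ℝ × ℝ)) (R : Set (ℝ × ℝ)) : Prop :=
  ∃ c ∈ F \ primaryHorizSet F P,
    R = closure (connectedComponentIn (F \ primaryHorizSet F P) c)

/-- `C` is a connected component of `S`. -/
def IsCompOf (S C : Set (ℝ × ℝ)) : Prop := ∃ c ∈ S, C = connectedComponentIn S c

/-- An x-separated configuration. -/
def XSep (c : (ℝ × ℝ) × (ℝ × ℝ)) : Prop := 1 ≤ |c.1.1 - c.2.1|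

/-- A y-separated configuration. -/
def YSep (c : (ℝ × ℝ) × (ℝ × ℝ)) : Prop := 1 ≤ |c.1.2 - c.2.2|

/-- Two configurations have the same x-order. -/
def SameXOrder (c d : (ℝ × ℝ) × (ℝ × ℝ)) : Prop :=
  Real.sign (c.1.1 - c.2.1) = Real.sign (d.1.1 - d.2.1)

/-- Two configurations have the same y-order. -/
def SameYOrder (c d : (ℝ × ℝ) × (ℝ × ℝ)) : Prop :=
  Real.sign (c.1.2 - c.2.2) = Real.sign (d.1.2 - d.2.2)

/-- During `[a,b]` the path `γ` traverses (affinely) a straight axis-parallel segment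
contained in `F` whose endpoints are grid points. -/
def MoveSeg (F P : Set (ℝ × ℝ)) (γ : ℝ → ℝ × ℝ) (a b : ℝ) : Prop :=
  IsGridPoint F P (γ a) ∧ IsGridPoint F P (γ b) ∧
    segment ℝ (γ a) (γ b) ⊆ F ∧
    ∃ v : ℝ × ℝ, (v.1 = 0 ∨ v.2 = 0) ∧ ∀ t ∈ Icc a b, γ t = γ a + (t - a) • v

/-- A canonical-grid plan: a rectilinear decoupled plan that is a finite concatenation of
moves in each of which one robot is parked at a grid point while the other traverses a
straight axis-parallel segment of the grid contained in `F`; in particular, every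
breakpoint of either robot path is a grid point. -/
def IsCanonicalGridPlan (F P : Set (ℝ × ℝ)) (pln : ℝ → (ℝ × ℝ) × (ℝ × ℝ)) : Prop :=
  IsRectilinearPlan pln ∧ IsDecoupled pln ∧
    ∃ (n : ℕ) (τ : ℕ → ℝ), τ 0 = 0 ∧ τ n = 1 ∧ (∀ i, i < n → τ i ≤ τ (i + 1)) ∧
      ∀ i, i < n →
        (IsGridPoint F P (pln (τ i)).1 ∧
            (∀ a ∈ Icc (τ i) (τ (i + 1)), (pln a).1 = (pln (τ i)).1) ∧
            MoveSeg F P (fun t => (pln t).2) (τ i) (τ (i + 1))) ∨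
        (IsGridPoint F P (pln (τ i)).2 ∧
            (∀ a ∈ Icc (τ i) (τ (i + 1)), (pln a).2 = (pln (τ i)).2) ∧
            MoveSeg F P (fun t => (pln t).1) (τ i) (τ (i + 1)))

/-- A path in the configuration graph from `s` to `t` with `k` edges. -/
def IsGraphPath (F P : Set (ℝ × ℝ)) (s t : (ℝ × ℝ) × (ℝ × ℝ)) (k : ℕ)
    (u : ℕ → (ℝ × ℝ) × (ℝ × ℝ)) : Prop :=
  u 0 = s ∧ u k = t ∧ ∀ j, j < k → ConfEdge F P (u j) (u (j + 1))

/-- The total weight (ℓ₁-distance in `ℝ⁴`) of a path in the configuration graph. -/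
def graphPathWeight (k : ℕ) (u : ℕ → (ℝ × ℝ) × (ℝ × ℝ)) : ℝ :=
  ∑ j ∈ Finset.range k, (l1 ((u (j + 1)).1 - (u j).1) + l1 ((u (j + 1)).2 - (u j).2))

/-- `pln` traverses the edges of the graph path `u` one after another (linearly
interpolating along each edge). -/
def IsEdgeTraversal (pln : ℝ → (ℝ × ℝ) × (ℝ × ℝ)) (k : ℕ)
    (u : ℕ → (ℝ × ℝ) × (ℝ × ℝ)) : Prop :=
  (k = 0 → ∀ a ∈ Icc (0 : ℝ) 1, pln a = u 0) ∧
    ∀ j, j < k → ∀ a ∈ Icc ((j : ℝ) / k) (((j : ℝ) + 1) / k),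
      pln a = u j + ((a - (j : ℝ) / k) * k) • (u (j + 1) - u j)

/-- A blocked pair for the corridor `[xlo,xhi] × [ylo,yhi]`. -/
def BlockedPair (F : Set (ℝ × ℝ)) (xlo xhi ylo yhi : ℝ) (u v : ℝ × ℝ) : Prop :=
  ∃ ρ ρ' edge : Set (ℝ × ℝ),
    ((ρ = Ico (xlo - 1) xlo ×ˢ Ico (ylo - 1) ylo ∧
        ρ' = Ico (xlo - 1) xlo ×ˢ Ioc yhi (yhi + 1) ∧
        edge = ({xlo} : Set ℝ) ×ˢ Icc (ylo - 1) (yhi + 1)) ∨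
      (ρ = Ioc xhi (xhi + 1) ×ˢ Ico (ylo - 1) ylo ∧
        ρ' = Ioc xhi (xhi + 1) ×ˢ Ioc yhi (yhi + 1) ∧
        edge = ({xhi} : Set ℝ) ×ˢ Icc (ylo - 1) (yhi + 1))) ∧
    ∃ φ φ' : Set (ℝ × ℝ), IsCompOf (ρ ∩ F) φ ∧ IsCompOf (ρ' ∩ F) φ' ∧
      (closure φ ∩ edge).Nonempty ∧ (closure φ' ∩ edge).Nonempty ∧
      ((u ∈ φ ∧ v ∈ φ') ∨ (u ∈ φ' ∧ v ∈ φ))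

/-- `[ν₁,ν₂] ⊆ [lam1,lam2]` is an unsafe interval for the plan `pln` w.r.t. the influence
region `IR`. -/
def IsUnsafeInterval (IR : Set (ℝ × ℝ)) (pln : ℝ → (ℝ × ℝ) × (ℝ × ℝ))
    (lam1 lam2 ν₁ ν₂ : ℝ) : Prop :=
  lam1 ≤ ν₁ ∧ ν₁ ≤ ν₂ ∧ ν₂ ≤ lam2 ∧
    (∀ ν ∈ Icc ν₁ ν₂, (pln ν).2 ∈ IR ∧ YSep (pln ν)) ∧
    (∀ a b : ℝ, lam1 ≤ a → a ≤ ν₁ → ν₂ ≤ b → b ≤ lam2 →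
      (∀ ν ∈ Icc a b, (pln ν).2 ∈ IR ∧ YSep (pln ν)) → a = ν₁ ∧ b = ν₂) ∧
    ∃ ν ∈ Icc ν₁ ν₂, ¬ XSep (pln ν)

/-! Going from `p` to the horizontal line through `h`, along `h`, and on to `q` costs exactly
`|p₁ - q₁| + |p₂ - y| + |q₂ - y|`, since the feet `p'` and `q'` lie in order between `p` and `q`.
A shortest path `g` is no longer than this. If `g` were not `x`-monotone, it would pass through two
points `u`, `v` with the same abscissa, at strictly more than the cost of the vertical segment
between them. The length bound then forces `u` and `v` to be at distance less than `1`, so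
this segment lies in `F` and shortcuts `g`. -/

section Variation

lemma eVariationOn_Icc_eq_edist_of_monotoneOn_or_antitoneOn {α : Type*} [LinearOrder α]
    {f : α → ℝ} {a b : α} (hab : a ≤ b) (hf : MonotoneOn f (Icc a b) ∨ AntitoneOn f (Icc a b)) :
    eVariationOn f (Icc a b) = edist (f a) (f b) := by
  wlog hmono : MonotoneOn f (Icc a b) generalizing f
  · have hneg : MonotoneOn (-f) (Icc a b) := (hf.resolve_left hmono).neg
    simpa [eVariationOn, edist_neg_neg] using this (.inl hneg) hneg
  have hvar := hmono.eVariationOn_eq (left_mem_Icc.2 hab) (right_mem_Icc.2 hab)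
  have hle : f a ≤ f b := hmono (left_mem_Icc.2 hab) (right_mem_Icc.2 hab) hab
  rw [inter_self] at hvar
  rw [hvar, edist_comm, edist_dist, Real.dist_eq, abs_of_nonneg (sub_nonneg.2 hle)]

lemma l1_nonneg (p : ℝ × ℝ) : 0 ≤ l1 p := by
  unfold l1
  positivity

lemma l1_sub_comm (p q : ℝ × ℝ) : l1 (p - q) = l1 (q - p) := by
  simp only [l1, Prod.fst_sub, Prod.snd_sub, abs_sub_comm]

lemma edist_fst_add_edist_snd (p q : ℝ × ℝ) :
    edist p.1 q.1 + edist p.2 q.2 = ENNReal.ofReal (l1 (p - q)) := by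
  simp only [edist_dist, Real.dist_eq, l1, Prod.fst_sub, Prod.snd_sub,
    ENNReal.ofReal_add (abs_nonneg _) (abs_nonneg _)]

lemma edist_withLp_one (p q : ℝ × ℝ) :
    edist ((WithLp.equiv 1 (ℝ × ℝ)).symm p) ((WithLp.equiv 1 (ℝ × ℝ)).symm q) =
      edist p.1 q.1 + edist p.2 q.2 :=
  WithLp.prod_edist_eq_of_L1 _ _

variable (γ : ℝ → ℝ × ℝ)

lemma l1VarOn_le_add (s : Set ℝ) :
    l1VarOn γ s ≤ eVariationOn (fun t => (γ t).1) s + eVariationOn (fun t => (γ t).2) s := by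
  refine iSup_le fun ⟨n, u, hu, hus⟩ => ?_
  simp only [edist_withLp_one, Finset.sum_add_distrib]
  exact add_le_add (eVariationOn.sum_le (f := fun t => (γ t).1) hu hus)
    (eVariationOn.sum_le (f := fun t => (γ t).2) hu hus)

lemma l1VarOn_Icc_add_Icc {a b c : ℝ} (hab : a ≤ b) (hbc : b ≤ c) :
    l1VarOn γ (Icc a b) + l1VarOn γ (Icc b c) = l1VarOn γ (Icc a c) := by
  simpa only [univ_inter, l1VarOn] using eVariationOn.Icc_add_Icc _ hab hbc (mem_univ b)

lemma ofReal_l1_le_l1VarOn {a b : ℝ} (hab : a ≤ b) :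
    ENNReal.ofReal (l1 (γ a - γ b)) ≤ l1VarOn γ (Icc a b) := by
  rw [← edist_fst_add_edist_snd, ← edist_withLp_one]
  exact eVariationOn.edist_le (fun t => (WithLp.equiv 1 (ℝ × ℝ)).symm (γ t))
    (left_mem_Icc.2 hab) (right_mem_Icc.2 hab)

lemma l1VarOn_comp_le_of_monotoneOn {φ : ℝ → ℝ} {s t : Set ℝ} (hφ : MonotoneOn φ t)
    (hst : MapsTo φ t s) : l1VarOn (γ ∘ φ) t ≤ l1VarOn γ s :=
  eVariationOn.comp_le_of_monotoneOn (fun t => (WithLp.equiv 1 (ℝ × ℝ)).symm (γ t)) φ hφ hst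

lemma l1VarOn_comp_le_of_antitoneOn {φ : ℝ → ℝ} {s t : Set ℝ} (hφ : AntitoneOn φ t)
    (hst : MapsTo φ t s) : l1VarOn (γ ∘ φ) t ≤ l1VarOn γ s :=
  eVariationOn.comp_le_of_antitoneOn (fun t => (WithLp.equiv 1 (ℝ × ℝ)).symm (γ t)) φ hφ hst

lemma l1VarOn_congr {γ γ' : ℝ → ℝ × ℝ} {s : Set ℝ} (h : EqOn γ γ' s) :
    l1VarOn γ s = l1VarOn γ' s :=
  eVariationOn.congr fun t ht => by simp only [h ht]

lemma pathLen_le_ofReal_l1_of_xyMonotone {γ : ℝ → ℝ × ℝ} (hγ : XYMonotone γ) :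
    pathLen γ ≤ ENNReal.ofReal (l1 (γ 0 - γ 1)) := by
  refine (l1VarOn_le_add γ _).trans_eq ?_
  rw [eVariationOn_Icc_eq_edist_of_monotoneOn_or_antitoneOn zero_le_one hγ.1,
    eVariationOn_Icc_eq_edist_of_monotoneOn_or_antitoneOn zero_le_one hγ.2,
    edist_fst_add_edist_snd]

end Variation

section IntrinsicDist

/-- The intrinsic `ℓ₁`-distance between two points of `S`: the infimum of the `ℓ₁`-lengths of the
paths in `S` joining them. It is `⊤` if there is no path of finite length. -/
def intrinsicDist (S : Set (ℝ × ℝ)) (p q : ℝ × ℝ) : ℝ≥0∞ :=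
  ⨅ (γ : ℝ → ℝ × ℝ) (_ : IsPathIn S p q γ), pathLen γ

variable {S : Set (ℝ × ℝ)} {p q r : ℝ × ℝ} {γ γ' : ℝ → ℝ × ℝ}

lemma intrinsicDist_le_pathLen (hγ : IsPathIn S p q γ) : intrinsicDist S p q ≤ pathLen γ :=
  iInf₂_le γ hγ

lemma IsShortestPathIn.pathLen_le_intrinsicDist (hγ : IsShortestPathIn S p q γ) :
    pathLen γ ≤ intrinsicDist S p q :=
  le_iInf₂ hγ.2

lemma intrinsicDist_le_l1VarOn_of_continuousOn {a b : ℝ} (hab : a ≤ b)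
    (hcont : ContinuousOn γ (Icc a b)) (hS : MapsTo γ (Icc a b) S) :
    intrinsicDist S (γ a) (γ b) ≤ l1VarOn γ (Icc a b) := by
  let φ : ℝ → ℝ := AffineMap.lineMap a b
  have hφ : Monotone φ := AffineMap.lineMap_mono hab
  have hmaps : MapsTo φ (Icc 0 1) (Icc a b) := fun t ht =>
    ⟨by simpa [φ] using hφ ht.1, by simpa [φ] using hφ ht.2⟩
  have hpath : IsPathIn S (γ a) (γ b) (γ ∘ φ) :=
    ⟨hcont.comp AffineMap.lineMap_continuous.continuousOn hmaps, by simp [φ], by simp [φ],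
      fun _ ht => hS (hmaps ht)⟩
  exact (intrinsicDist_le_pathLen hpath).trans
    (l1VarOn_comp_le_of_monotoneOn γ (hφ.monotoneOn _) hmaps)

lemma intrinsicDist_comm_le (S : Set (ℝ × ℝ)) (p q : ℝ × ℝ) :
    intrinsicDist S p q ≤ intrinsicDist S q p := by
  refine le_iInf₂ fun γ ⟨hcont, h0, h1, hS⟩ => ?_
  have hanti : AntitoneOn (fun t : ℝ => 1 - t) (Icc 0 1) := fun _ _ _ _ h => sub_le_sub_left h 1
  have hmaps : MapsTo (fun t : ℝ => 1 - t) (Icc 0 1) (Icc 0 1) := fun t ht =>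
    ⟨sub_nonneg.2 ht.2, sub_le_self 1 ht.1⟩
  have hpath : IsPathIn S p q (γ ∘ fun t => 1 - t) :=
    ⟨hcont.comp (by fun_prop) hmaps, by simpa using h1, by simpa using h0,
      fun t ht => hS _ (hmaps ht)⟩
  exact (intrinsicDist_le_pathLen hpath).trans (l1VarOn_comp_le_of_antitoneOn γ hanti hmaps)

lemma intrinsicDist_comm (S : Set (ℝ × ℝ)) (p q : ℝ × ℝ) :
    intrinsicDist S p q = intrinsicDist S q p :=
  le_antisymm (intrinsicDist_comm_le S p q) (intrinsicDist_comm_le S q p)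

lemma intrinsicDist_le_pathLen_add_pathLen (hγ : IsPathIn S p q γ) (hγ' : IsPathIn S q r γ') :
    intrinsicDist S p r ≤ pathLen γ + pathLen γ' := by
  obtain ⟨hcont, h0, h1, hS⟩ := hγ
  obtain ⟨hcont', h0', h1', hS'⟩ := hγ'
  let f : ℝ → ℝ × ℝ := fun t => if t ≤ 1 then γ t else γ' (t - 1)
  have hleft : EqOn f γ (Icc 0 1) := fun t ht => if_pos ht.2
  have hright : EqOn f (γ' ∘ fun t => t - 1) (Icc 1 2) := fun t ht => by
    rcases ht.1.eq_or_lt with rfl | hlt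
    · simp [f, h1, h0']
    · exact if_neg hlt.not_ge
  have hmono : MonotoneOn (fun t : ℝ => t - 1) (Icc 1 2) := fun _ _ _ _ h => sub_le_sub_right h 1
  have hmaps : MapsTo (fun t : ℝ => t - 1) (Icc 1 2) (Icc 0 1) := fun t ht =>
    ⟨sub_nonneg.2 ht.1, by linarith [ht.2]⟩
  have hunion : Icc (0 : ℝ) 1 ∪ Icc 1 2 = Icc 0 2 := Icc_union_Icc_eq_Icc zero_le_one one_le_two
  have hf : ContinuousOn f (Icc 0 2) := hunion ▸ (hcont.congr hleft).union_of_isClosed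
    ((hcont'.comp (by fun_prop) hmaps).congr hright) isClosed_Icc isClosed_Icc
  have hfS : MapsTo f (Icc 0 2) S := hunion ▸ MapsTo.union
    (MapsTo.congr hS hleft.symm) (MapsTo.congr (MapsTo.comp hS' hmaps) hright.symm)
  calc intrinsicDist S p r = intrinsicDist S (f 0) (f 2) := by
        rw [hleft (by simp), hright (by simp)]; norm_num [h0, h1']
    _ ≤ l1VarOn f (Icc 0 2) :=
        intrinsicDist_le_l1VarOn_of_continuousOn zero_le_two hf hfS
    _ = pathLen γ + l1VarOn (γ' ∘ fun t => t - 1) (Icc 1 2) := by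
        rw [← l1VarOn_Icc_add_Icc f zero_le_one one_le_two, l1VarOn_congr hleft,
          l1VarOn_congr hright, pathLen]
    _ ≤ pathLen γ + pathLen γ' := by
        gcongr
        exact l1VarOn_comp_le_of_monotoneOn γ' hmono hmaps

lemma intrinsicDist_triangle (S : Set (ℝ × ℝ)) (p q r : ℝ × ℝ) :
    intrinsicDist S p r ≤ intrinsicDist S p q + intrinsicDist S q r :=
  ENNReal.le_iInf₂_add_iInf₂ fun _ hγ _ hγ' => intrinsicDist_le_pathLen_add_pathLen hγ hγ'

lemma intrinsicDist_le_ofReal_l1_add_l1_add_l1 {r' : ℝ × ℝ}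
    (hpq : intrinsicDist S p q ≤ ENNReal.ofReal (l1 (p - q)))
    (hqr : intrinsicDist S q r ≤ ENNReal.ofReal (l1 (q - r)))
    (hrr' : intrinsicDist S r r' ≤ ENNReal.ofReal (l1 (r - r'))) :
    intrinsicDist S p r' ≤ ENNReal.ofReal (l1 (p - q) + l1 (q - r) + l1 (r - r')) := by
  rw [ENNReal.ofReal_add (add_nonneg (l1_nonneg _) (l1_nonneg _)) (l1_nonneg _),
    ENNReal.ofReal_add (l1_nonneg _) (l1_nonneg _)]
  calc intrinsicDist S p r' ≤ intrinsicDist S p r + intrinsicDist S r r' :=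
        intrinsicDist_triangle S p r r'
    _ ≤ intrinsicDist S p q + intrinsicDist S q r + intrinsicDist S r r' := by
        gcongr
        exact intrinsicDist_triangle S p q r
    _ ≤ _ := by gcongr

lemma IsPathIn.intrinsicDist_le_of_xyMonotone (hγ : IsPathIn S p q γ) (hmono : XYMonotone γ) :
    intrinsicDist S p q ≤ ENNReal.ofReal (l1 (p - q)) := by
  rw [← hγ.2.1, ← hγ.2.2.1]
  exact (intrinsicDist_le_pathLen ⟨hγ.1, rfl, rfl, hγ.2.2.2⟩).trans
    (pathLen_le_ofReal_l1_of_xyMonotone hmono)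

lemma monotone_or_antitone_lineMap (a b : ℝ) :
    Monotone (AffineMap.lineMap a b : ℝ → ℝ) ∨ Antitone (AffineMap.lineMap a b : ℝ → ℝ) :=
  (le_total a b).imp (fun h => AffineMap.lineMap_mono h) (fun h => AffineMap.lineMap_anti h)

lemma intrinsicDist_le_of_segment_subset (h : segment ℝ p q ⊆ S) :
    intrinsicDist S p q ≤ ENNReal.ofReal (l1 (p - q)) := by
  let γ : ℝ → ℝ × ℝ := fun t => (AffineMap.lineMap p.1 q.1 t, AffineMap.lineMap p.2 q.2 t)
  have hγ : γ = AffineMap.lineMap p q := by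
    ext t <;> simp [γ]
  have hpath : IsPathIn S p q γ := by
    refine ⟨by fun_prop, by simp [γ], by simp [γ], fun t ht => h ?_⟩
    rw [segment_eq_image_lineMap, hγ]
    exact mem_image_of_mem _ ht
  exact hpath.intrinsicDist_le_of_xyMonotone
    ⟨(monotone_or_antitone_lineMap p.1 q.1).imp (·.monotoneOn _) (·.antitoneOn _),
      (monotone_or_antitone_lineMap p.2 q.2).imp (·.monotoneOn _) (·.antitoneOn _)⟩

end IntrinsicDist

section Arcs

variable {S : Set (ℝ × ℝ)} {p q : ℝ × ℝ} {γ : ℝ → ℝ × ℝ} {s r : ℝ}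

lemma l1VarOn_add_l1VarOn_add_l1VarOn_eq_pathLen (γ : ℝ → ℝ × ℝ) (hs : 0 ≤ s) (hsr : s ≤ r)
    (hr : r ≤ 1) :
    l1VarOn γ (Icc 0 s) + l1VarOn γ (Icc s r) + l1VarOn γ (Icc r 1) = pathLen γ := by
  rw [l1VarOn_Icc_add_Icc γ hs hsr, l1VarOn_Icc_add_Icc γ (hs.trans hsr) hr, pathLen]

lemma IsPathIn.intrinsicDist_le_l1VarOn (hγ : IsPathIn S p q γ) (hs : 0 ≤ s) (hsr : s ≤ r)
    (hr : r ≤ 1) : intrinsicDist S (γ s) (γ r) ≤ l1VarOn γ (Icc s r) :=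
  have hsub : Icc s r ⊆ Icc 0 1 := Icc_subset_Icc hs hr
  intrinsicDist_le_l1VarOn_of_continuousOn hsr (hγ.1.mono hsub) fun t ht => hγ.2.2.2 t (hsub ht)

lemma IsShortestPathIn.l1VarOn_le_intrinsicDist (hγ : IsShortestPathIn S p q γ)
    (hfin : pathLen γ ≠ ⊤) (hs : 0 ≤ s) (hsr : s ≤ r) (hr : r ≤ 1) :
    l1VarOn γ (Icc s r) ≤ intrinsicDist S (γ s) (γ r) := by
  have hsplit := l1VarOn_add_l1VarOn_add_l1VarOn_eq_pathLen γ hs hsr hr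
  have hdetour : pathLen γ ≤
      l1VarOn γ (Icc 0 s) + intrinsicDist S (γ s) (γ r) + l1VarOn γ (Icc r 1) := by
    calc pathLen γ ≤ intrinsicDist S (γ 0) (γ 1) := by
          rw [hγ.1.2.1, hγ.1.2.2.1]
          exact hγ.pathLen_le_intrinsicDist
      _ ≤ intrinsicDist S (γ 0) (γ s) + intrinsicDist S (γ s) (γ r) +
            intrinsicDist S (γ r) (γ 1) :=
          (intrinsicDist_triangle S _ (γ r) _).trans
            (add_le_add_left (intrinsicDist_triangle S _ _ _) _)
      _ ≤ _ := by
          gcongr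
          · exact hγ.1.intrinsicDist_le_l1VarOn le_rfl hs (hsr.trans hr)
          · exact hγ.1.intrinsicDist_le_l1VarOn (hs.trans hsr) hr le_rfl
  obtain ⟨⟨hfin₁, -⟩, hfin₂⟩ : (l1VarOn γ (Icc 0 s) ≠ ⊤ ∧ l1VarOn γ (Icc s r) ≠ ⊤) ∧
      l1VarOn γ (Icc r 1) ≠ ⊤ := by
    simpa only [← hsplit, ENNReal.add_ne_top] using hfin
  rwa [← hsplit, ENNReal.add_le_add_iff_right hfin₂, ENNReal.add_le_add_iff_left hfin₁] at hdetour

lemma l1_add_l1_add_l1_lt_of_pathLen_le {M : ℝ} (hs : 0 ≤ s) (hsr : s ≤ r) (hr : r ≤ 1)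
    (hM : pathLen γ ≤ ENNReal.ofReal M)
    (hlt : ENNReal.ofReal (l1 (γ s - γ r)) < l1VarOn γ (Icc s r)) :
    l1 (γ 0 - γ s) + l1 (γ s - γ r) + l1 (γ r - γ 1) < M := by
  have h₁ := l1_nonneg (γ 0 - γ s)
  have h₂ := l1_nonneg (γ s - γ r)
  have h₃ := l1_nonneg (γ r - γ 1)
  rw [← ENNReal.ofReal_lt_ofReal_iff_of_nonneg (by positivity),
    ENNReal.ofReal_add (by positivity) h₃, ENNReal.ofReal_add h₁ h₂]
  refine lt_of_lt_of_le ?_ ((l1VarOn_add_l1VarOn_add_l1VarOn_eq_pathLen γ hs hsr hr).trans_le hM)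
  exact ENNReal.add_lt_add_of_lt_of_le ENNReal.ofReal_ne_top
    (ENNReal.add_lt_add_of_le_of_lt ENNReal.ofReal_ne_top (ofReal_l1_le_l1VarOn γ hs) hlt)
    (ofReal_l1_le_l1VarOn γ hr)

end Arcs

section Backtracking

lemma exists_return_of_not_monotoneOn_of_not_antitoneOn {f : ℝ → ℝ} {a b : ℝ}
    (hf : ContinuousOn f (Icc a b)) (hmono : ¬ MonotoneOn f (Icc a b))
    (hanti : ¬ AntitoneOn f (Icc a b)) :
    ∃ s t r, a ≤ s ∧ s ≤ t ∧ t ≤ r ∧ r ≤ b ∧ f s = f r ∧ f t ≠ f s := by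
  obtain ⟨s, hs, t, ht, r, hr, hst, htr, hturn⟩ :=
    not_monotoneOn_not_antitoneOn_iff_exists_le_le.1 ⟨hmono, hanti⟩
  wlog hpeak : f s < f t ∧ f r < f t generalizing f
  · obtain ⟨s, t, r, has, hst, htr, hrb, heq, hne⟩ := this (f := -f) hf.neg
      (fun h => hanti (by simpa using h.neg)) (fun h => hmono (by simpa using h.neg))
      (by simpa [and_comm, or_comm] using hturn) (by simpa using hturn.resolve_left hpeak)
    exact ⟨s, t, r, has, hst, htr, hrb, neg_injective heq, fun h => hne (congrArg Neg.neg h)⟩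
  have hcont₁ : ContinuousOn f (Icc s t) := hf.mono (Icc_subset_Icc hs.1 ht.2)
  have hcont₂ : ContinuousOn f (Icc t r) := hf.mono (Icc_subset_Icc ht.1 hr.2)
  rcases le_total (f s) (f r) with hle | hle
  · obtain ⟨x, hx, hxr⟩ := intermediate_value_Icc hst hcont₁ ⟨hle, hpeak.2.le⟩
    exact ⟨x, t, r, hs.1.trans hx.1, hx.2, htr, hr.2, hxr, hxr ▸ hpeak.2.ne'⟩
  · obtain ⟨x, hx, hxs⟩ := intermediate_value_Icc' htr hcont₂ ⟨hle, hpeak.1.le⟩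
    exact ⟨s, t, x, hs.1, hst, hx.1, hx.2.trans hr.2, hxs.symm, hpeak.1.ne'⟩

lemma ofReal_l1_lt_l1VarOn_of_return {γ : ℝ → ℝ × ℝ} {s t r : ℝ} (hst : s ≤ t) (htr : t ≤ r)
    (heq : (γ s).1 = (γ r).1) (hne : (γ t).1 ≠ (γ s).1) :
    ENNReal.ofReal (l1 (γ s - γ r)) < l1VarOn γ (Icc s r) := by
  have hstrict : l1 (γ s - γ r) < l1 (γ s - γ t) + l1 (γ t - γ r) := by
    have hpos : 0 < |(γ s).1 - (γ t).1| := abs_pos.2 (sub_ne_zero.2 hne.symm)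
    have htri := abs_sub_le (γ s).2 (γ t).2 (γ r).2
    simp only [l1, Prod.fst_sub, Prod.snd_sub, ← heq, sub_self, abs_zero]
    linarith [abs_nonneg ((γ t).1 - (γ s).1)]
  calc ENNReal.ofReal (l1 (γ s - γ r))
      < ENNReal.ofReal (l1 (γ s - γ t) + l1 (γ t - γ r)) :=
        (ENNReal.ofReal_lt_ofReal_iff_of_nonneg (l1_nonneg _)).2 hstrict
    _ = ENNReal.ofReal (l1 (γ s - γ t)) + ENNReal.ofReal (l1 (γ t - γ r)) :=
        ENNReal.ofReal_add (l1_nonneg _) (l1_nonneg _)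
    _ ≤ l1VarOn γ (Icc s t) + l1VarOn γ (Icc t r) :=
        add_le_add (ofReal_l1_le_l1VarOn γ hst) (ofReal_l1_le_l1VarOn γ htr)
    _ = l1VarOn γ (Icc s r) := l1VarOn_Icc_add_Icc γ hst htr

lemma exists_vertical_chord_lt_l1VarOn_of_not_xMonotone {γ : ℝ → ℝ × ℝ}
    (hγ : ContinuousOn γ (Icc 0 1)) (hmono : ¬ XMonotone γ) :
    ∃ s r, 0 ≤ s ∧ s ≤ r ∧ r ≤ 1 ∧ (γ s).1 = (γ r).1 ∧
      ENNReal.ofReal (l1 (γ s - γ r)) < l1VarOn γ (Icc s r) := by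
  obtain ⟨hmono, hanti⟩ := not_or.1 hmono
  obtain ⟨s, t, r, hs, hst, htr, hr, heq, hne⟩ :=
    exists_return_of_not_monotoneOn_of_not_antitoneOn (continuous_fst.comp_continuousOn hγ)
      hmono hanti
  exact ⟨s, r, hs, hst.trans htr, hr, heq, ofReal_l1_lt_l1VarOn_of_return hst htr heq hne⟩

lemma abs_sub_lt_one_of_add_lt_max {x y u v : ℝ}
    (h : |x - u| + |u - v| + |v - y| < max |x - y| (2 - |x - y|)) : |u - v| < 1 := by
  have hxy : |x - y| ≤ |x - u| + |u - v| + |v - y| :=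
    (abs_sub_le x v y).trans (add_le_add_left (abs_sub_le x u v) _)
  have huv : |u - v| ≤ |x - u| + |x - y| + |v - y| := by
    rw [abs_sub_comm x u, abs_sub_comm v y]
    exact (abs_sub_le u y v).trans (add_le_add_left (abs_sub_le u x y) _)
  have hmax := (lt_max_iff.1 h).resolve_left hxy.not_gt
  linarith

lemma abs_sub_add_abs_sub_le_max {x y z : ℝ} (hx : |x - z| ≤ 1) (hy : |y - z| ≤ 1) :
    |x - z| + |y - z| ≤ max |x - y| (2 - |x - y|) := by
  grind

-- The maximum in the length bound is there because a vertical chord of height `d` forces at least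
-- `max |p₂ - q₂| (2d - |p₂ - q₂|)` of vertical travel.
theorem IsShortestPathIn.xMonotone_of_pathLen_le {F : Set (ℝ × ℝ)} {p q : ℝ × ℝ}
    {γ : ℝ → ℝ × ℝ} (hγ : IsShortestPathIn F p q γ)
    (hseg : ∀ u ∈ F, ∀ v ∈ F, u.1 = v.1 → |u.2 - v.2| ≤ 1 → segment ℝ u v ⊆ F)
    (hlen : pathLen γ ≤ ENNReal.ofReal (|p.1 - q.1| + max |p.2 - q.2| (2 - |p.2 - q.2|))) :
    XMonotone γ := by
  by_contra hmono
  obtain ⟨s, r, hs, hsr, hr, heq, hlt⟩ :=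
    exists_vertical_chord_lt_l1VarOn_of_not_xMonotone hγ.1.1 hmono
  have hfin : pathLen γ ≠ ⊤ := ne_top_of_le_ne_top ENNReal.ofReal_ne_top hlen
  have hchord : |(γ s).2 - (γ r).2| < 1 := by
    have hsum := l1_add_l1_add_l1_lt_of_pathLen_le hs hsr hr hlen hlt
    have hx := abs_sub_le p.1 (γ s).1 q.1
    simp only [l1, Prod.fst_sub, Prod.snd_sub, hγ.1.2.1, hγ.1.2.2.1, ← heq, sub_self,
      abs_zero] at hsum
    exact abs_sub_lt_one_of_add_lt_max (x := p.2) (y := q.2) (by linarith)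
  have hsub : segment ℝ (γ s) (γ r) ⊆ F :=
    hseg _ (hγ.1.2.2.2 s ⟨hs, hsr.trans hr⟩) _ (hγ.1.2.2.2 r ⟨hs.trans hsr, hr⟩) heq hchord.le
  exact hlt.not_ge ((hγ.l1VarOn_le_intrinsicDist hfin hs hsr hr).trans
    (intrinsicDist_le_of_segment_subset hsub))

end Backtracking

section Projection

lemma eq_max_min_of_abs_sub_le {a b x x' : ℝ} (hx' : x' ∈ Icc a b)
    (hmin : ∀ z ∈ Icc a b, |x - x'| ≤ |x - z|) : x' = max a (min b x) := by
  obtain ⟨hax', hx'b⟩ := hx'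
  have := hmin (max a (min b x)) ⟨le_max_left _ _, by grind⟩
  grind

lemma eq_max_min_of_euclDist_le {a b y : ℝ} {p p' : ℝ × ℝ}
    (hp' : p' ∈ Icc a b ×ˢ ({y} : Set ℝ))
    (hmin : ∀ z ∈ Icc a b ×ˢ ({y} : Set ℝ), euclDist p p' ≤ euclDist p z) :
    p' = (max a (min b p.1), y) := by
  obtain ⟨hx', rfl : p'.2 = y⟩ := hp'
  refine Prod.ext (eq_max_min_of_abs_sub_le hx' fun z hz => sq_le_sq.1 ?_) rfl
  have := hmin (z, p'.2) ⟨hz, rfl⟩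
  rw [euclDist, euclDist, Real.sqrt_le_sqrt_iff (by positivity)] at this
  exact le_of_add_le_add_right this

lemma abs_sub_max_min_add_le {a b x y : ℝ} (ha : a ≤ max x y) (hb : min x y ≤ b) :
    |x - max a (min b x)| + |max a (min b x) - max a (min b y)| + |max a (min b y) - y| ≤
      |x - y| := by
  wlog hxy : x ≤ y generalizing x y
  · have := this (max_comm x y ▸ ha) (min_comm x y ▸ hb) (le_of_not_ge hxy)
    simp only [abs_sub_comm] at this ⊢
    linarith
  rw [max_eq_right hxy] at ha
  rw [min_eq_left hxy] at hb
  have hx : x ≤ max a (min b x) := (min_eq_right hb).symm ▸ le_max_right a x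
  have hmid : max a (min b x) ≤ max a (min b y) := by gcongr
  have hy : max a (min b y) ≤ y := max_le ha (min_le_right b y)
  rw [abs_of_nonpos (sub_nonpos.2 hx), abs_of_nonpos (sub_nonpos.2 hmid),
    abs_of_nonpos (sub_nonpos.2 hy), abs_of_nonpos (sub_nonpos.2 hxy)]
  linarith

lemma l1_add_l1_add_l1_le_of_projection {a b y : ℝ} {p q p' q' : ℝ × ℝ}
    (hp' : p' = (max a (min b p.1), y)) (hq' : q' = (max a (min b q.1), y))
    (hpy : |p.2 - y| ≤ 1) (hqy : |q.2 - y| ≤ 1) (ha : a ≤ max p.1 q.1) (hb : min p.1 q.1 ≤ b) :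
    l1 (p - p') + l1 (p' - q') + l1 (q' - q) ≤
      |p.1 - q.1| + max |p.2 - q.2| (2 - |p.2 - q.2|) := by
  have hx := abs_sub_max_min_add_le ha hb
  have hy := abs_sub_add_abs_sub_le_max hpy hqy
  subst hp' hq'
  simp only [l1, Prod.fst_sub, Prod.snd_sub, sub_self, abs_zero, abs_sub_comm y q.2]
  linarith

end Projection

theorem shortestPath_xMonotone_of_horizontal_segment_general {F : Set (ℝ × ℝ)}
    (hseg : ∀ u ∈ F, ∀ v ∈ F, u.1 = v.1 → |u.2 - v.2| ≤ 1 → segment ℝ u v ⊆ F)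
    {p q : ℝ × ℝ} {a b y : ℝ} (hF : Icc a b ×ˢ ({y} : Set ℝ) ⊆ F)
    {p' : ℝ × ℝ} (hp' : p' ∈ Icc a b ×ˢ ({y} : Set ℝ))
    (hp'min : ∀ z ∈ Icc a b ×ˢ ({y} : Set ℝ), euclDist p p' ≤ euclDist p z)
    {q' : ℝ × ℝ} (hq' : q' ∈ Icc a b ×ˢ ({y} : Set ℝ))
    (hq'min : ∀ z ∈ Icc a b ×ˢ ({y} : Set ℝ), euclDist q q' ≤ euclDist q z)
    (hpy : |p.2 - y| ≤ 1) (hqy : |q.2 - y| ≤ 1)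
    (hpp' : ∃ γ, IsPathIn F p p' γ ∧ XYMonotone γ)
    (hqq' : ∃ γ, IsPathIn F q q' γ ∧ XYMonotone γ)
    (ha : a ≤ max p.1 q.1) (hb : min p.1 q.1 ≤ b)
    {g : ℝ → ℝ × ℝ} (hg : IsShortestPathIn F p q g) :
    XMonotone g := by
  obtain ⟨γ, hγ, hγmono⟩ := hpp'
  obtain ⟨γ', hγ', hγ'mono⟩ := hqq'
  have hsub : segment ℝ p' q' ⊆ F :=
    (((convex_Icc a b).prod (convex_singleton y)).segment_subset hp' hq').trans hF
  have hqq'dist := hγ'.intrinsicDist_le_of_xyMonotone hγ'mono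
  rw [intrinsicDist_comm, l1_sub_comm] at hqq'dist
  refine hg.xMonotone_of_pathLen_le hseg ?_
  calc pathLen g ≤ intrinsicDist F p q := hg.pathLen_le_intrinsicDist
    _ ≤ ENNReal.ofReal (l1 (p - p') + l1 (p' - q') + l1 (q' - q)) :=
        intrinsicDist_le_ofReal_l1_add_l1_add_l1 (hγ.intrinsicDist_le_of_xyMonotone hγmono)
          (intrinsicDist_le_of_segment_subset hsub) hqq'dist
    _ ≤ _ := ENNReal.ofReal_le_ofReal (l1_add_l1_add_l1_le_of_projection
        (eq_max_min_of_euclDist_le hp' hp'min) (eq_max_min_of_euclDist_le hq' hq'min)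
        hpy hqy ha hb)

/-- Under the stated hypotheses on `F`, `p`, `q` and the horizontal
segment `h`, every shortest path in `F` from `p` to `q` is x-monotone. -/
theorem shortestPath_xMonotone_of_horizontal_segment
    (F : Set (ℝ × ℝ)) (hFclosed : IsClosed F)
    (hseg : ∀ p q : ℝ × ℝ, p ∈ F → q ∈ F → (p.1 = q.1 ∨ p.2 = q.2) → l1 (p - q) ≤ 1 →
      segment ℝ p q ⊆ F)
    (p q : ℝ × ℝ) (hp : p ∈ F) (hq : q ∈ F)
    (a b yh : ℝ) (hab : a < b)
    (h : Set (ℝ × ℝ)) (hh : h = Icc a b ×ˢ ({yh} : Set ℝ)) (hhF : h ⊆ F)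
    (p' : ℝ × ℝ) (hp'mem : p' ∈ h) (hp'min : ∀ z ∈ h, euclDist p p' ≤ euclDist p z)
    (q' : ℝ × ℝ) (hq'mem : q' ∈ h) (hq'min : ∀ z ∈ h, euclDist q q' ≤ euclDist q z)
    (hip : |p.2 - yh| ≤ 1) (hiq : |q.2 - yh| ≤ 1)
    (hiip : (∃ g, IsShortestPathIn F p p' g) ∧
      ∀ g, IsShortestPathIn F p p' g → XYMonotone g)
    (hiiq : (∃ g, IsShortestPathIn F q q' g) ∧
      ∀ g, IsShortestPathIn F q q' g → XYMonotone g)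
    (hiii₁ : a ≤ max p.1 q.1) (hiii₂ : min p.1 q.1 ≤ b)
    (g : ℝ → ℝ × ℝ) (hg : IsShortestPathIn F p q g) :
    XMonotone g := by
  subst hh
  exact shortestPath_xMonotone_of_horizontal_segment_general
    (fun u hu v hv hx hy => hseg u v hu hv (.inl hx) (by simpa [l1, hx] using hy))
    hhF hp'mem hp'min hq'mem hq'min hip hiq (hiip.1.imp fun k hk => ⟨hk.1, hiip.2 k hk⟩)
    (hiiq.1.imp fun k hk => ⟨hk.1, hiiq.2 k hk⟩) hiii₁ hiii₂ hg

end
end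

section
/- Let F ⊆ ℝ² be any set and let 𝐅 be the corresponding 4-dimensional free space. Let p = (p_A,p_B) ∈ 𝐅 and q = (q_A,q_B) ∈ 𝐅 be x-separated configurations with the same x-order, and suppose there is an x-monotone path φ_A in F from p_A to q_A and an x-monotone path φ_B in F from p_B to q_B. Then there exists a feasible plan φ : [0,1] → 𝐅 with φ(0) = p and φ(1) = q such that either on [0,1/2] the second robot stays at p_B while the first traverses φ_A and on [1/2,1] the first robot stays at q_A while the second traverses φ_B, or symmetrically with the roles of the two robots exchanged; moreover φ(λ) is x-separated for every λ ∈ [0,1]. The analogous statement holds with the x-direction replaced everywhere by the y-direction. -/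
open Set
open scoped ENNReal

noncomputable section

/-!
Write `a`, `b` for the coordinates of the two robots at `p` and `a'`, `b'` for those at `q`. Having
the same order means that `(a, b)` and `(a', b')` lie in the same component of `{|a - b| ≥ 1}`, a
half-plane `H`. The mixed corners `(a', b)` and `(a, b')` have the same midpoint as `(a, b)` and
`(a', b')`, so they cannot both lie in the convex complement of `H`. If `(a', b)` lies in `H`, then
the first robot may move first: by monotonicity its coordinate remains between `a` and `a'`, so by
convexity of `H` the separation is never lost, and likewise when the second robot follows. If
`(a, b')` lies in `H`, the second robot moves first.
-/

/-- A hemispace: a convex set whose complement is convex. Half-spaces, open or closed, are the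
motivating examples. -/
structure IsHemispace (𝕜 : Type*) {E : Type*} [Semiring 𝕜] [PartialOrder 𝕜] [AddCommMonoid E]
    [SMul 𝕜 E] (H : Set E) : Prop where
  convex : Convex 𝕜 H
  convex_compl : Convex 𝕜 Hᶜ

section Hemispace

variable {𝕜 E E' : Type*} [Field 𝕜] [LinearOrder 𝕜] [IsStrictOrderedRing 𝕜]
  [AddCommGroup E] [Module 𝕜 E] [AddCommGroup E'] [Module 𝕜 E']

theorem isHemispace_setOf_le {f : E → 𝕜} (hf : IsLinearMap 𝕜 f) (r : 𝕜) :
    IsHemispace 𝕜 {x | r ≤ f x} where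
  convex := convex_halfSpace_ge hf r
  convex_compl := by
    simpa only [compl_ofPred, not_le] using convex_halfSpace_lt hf r

theorem IsHemispace.mem_or_mem_of_add_eq_add {H : Set E} (hH : IsHemispace 𝕜 H) {x y z w : E}
    (hx : x ∈ H) (hy : y ∈ H) (h : z + w = x + y) : z ∈ H ∨ w ∈ H := by
  by_contra! hzw
  have hmid : midpoint 𝕜 z w = midpoint 𝕜 x y := by
    simp only [midpoint_eq_smul_add, h]
  exact hH.convex_compl.midpoint_mem hzw.1 hzw.2 (hmid ▸ hH.convex.midpoint_mem hx hy)

theorem IsHemispace.staircase_mem_or_staircase_mem {H : Set (E × E')} (hH : IsHemispace 𝕜 H)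
    {a a' : E} {b b' : E'} (h : (a, b) ∈ H) (h' : (a', b') ∈ H) :
    ((∀ x ∈ segment 𝕜 a a', (x, b) ∈ H) ∧ ∀ y ∈ segment 𝕜 b b', (a', y) ∈ H) ∨
      ((∀ y ∈ segment 𝕜 b b', (a, y) ∈ H) ∧ ∀ x ∈ segment 𝕜 a a', (x, b') ∈ H) := by
  have horizontal {c : E'} (hl : (a, c) ∈ H) (hr : (a', c) ∈ H) :
      ∀ x ∈ segment 𝕜 a a', (x, c) ∈ H := fun x hx ↦
    hH.convex.segment_subset hl hr <|
      Prod.image_mk_segment_left (𝕜 := 𝕜) a a' c ▸ mem_image_of_mem _ hx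
  have vertical {c : E} (hl : (c, b) ∈ H) (hr : (c, b') ∈ H) :
      ∀ y ∈ segment 𝕜 b b', (c, y) ∈ H := fun y hy ↦
    hH.convex.segment_subset hl hr <|
      Prod.image_mk_segment_right (𝕜 := 𝕜) c b b' ▸ mem_image_of_mem _ hy
  have corners : (a', b) + (a, b') = (a, b) + (a', b') := by
    simp only [Prod.mk_add_mk, add_comm a' a]
  exact (hH.mem_or_mem_of_add_eq_add h h' corners).imp
    (fun hc ↦ ⟨horizontal h hc, vertical hc h'⟩) (fun hc ↦ ⟨vertical h hc, horizontal hc h'⟩)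

end Hemispace

theorem le_and_le_or_le_neg_and_le_neg_of_sign_eq {r x y : ℝ} (hr : 0 < r) (hx : r ≤ |x|)
    (hy : r ≤ |y|) (h : Real.sign x = Real.sign y) : (r ≤ x ∧ r ≤ y) ∨ (r ≤ -x ∧ r ≤ -y) := by
  rcases le_abs.mp hx with hx | hx <;> rcases le_abs.mp hy with hy | hy
  · exact .inl ⟨hx, hy⟩
  · rw [Real.sign_of_pos (by linarith), Real.sign_of_neg (by linarith)] at h
    norm_num at h
  · rw [Real.sign_of_neg (by linarith), Real.sign_of_pos (by linarith)] at h
    norm_num at h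
  · exact .inr ⟨hx, hy⟩

theorem exists_isHemispace_forall_le_abs_sub {r a a' b b' : ℝ} (hr : 0 < r)
    (h : r ≤ |a - b|) (h' : r ≤ |a' - b'|) (hsign : Real.sign (a - b) = Real.sign (a' - b')) :
    ∃ H : Set (ℝ × ℝ), IsHemispace ℝ H ∧ (a, b) ∈ H ∧ (a', b') ∈ H ∧
      ∀ c ∈ H, r ≤ |c.1 - c.2| := by
  have hlin : IsLinearMap ℝ fun c : ℝ × ℝ ↦ c.1 - c.2 := IsLinearMap.isLinearMap_sub
  rcases le_and_le_or_le_neg_and_le_neg_of_sign_eq hr h h' hsign with ⟨h, h'⟩ | ⟨h, h'⟩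
  · exact ⟨_, isHemispace_setOf_le hlin r, h, h', fun c hc ↦ le_abs.mpr (.inl hc)⟩
  · have hneg : IsLinearMap ℝ fun c : ℝ × ℝ ↦ -(c.1 - c.2) := (-hlin.mk').isLinear
    exact ⟨_, isHemispace_setOf_le hneg r, h, h', fun c hc ↦ le_abs.mpr (.inr hc)⟩

section Concatenation

variable {Z : Type*} {γ δ φ : ℝ → Z}

/-- `φ` is a concatenation of `γ` and `δ`, all three regarded as paths parameterized by `[0,1]`:
nothing is asked of `φ` outside `[0,1]`. It is a relation rather than a function so that it unfolds
to the description of decoupled plans. -/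
def IsConcat (γ δ φ : ℝ → Z) : Prop :=
  (∀ t ∈ Icc (0 : ℝ) (1 / 2), φ t = γ (2 * t)) ∧ ∀ t ∈ Icc (1 / 2 : ℝ) 1, φ t = δ (2 * t - 1)

theorem IsConcat.apply_zero (h : IsConcat γ δ φ) : φ 0 = γ 0 := by
  rw [h.1 0 (by norm_num), mul_zero]

theorem IsConcat.apply_one (h : IsConcat γ δ φ) : φ 1 = δ 1 := by
  rw [h.2 1 (by norm_num)]
  norm_num

theorem IsConcat.mapsTo (h : IsConcat γ δ φ) {S : Set Z} (hγ : MapsTo γ (Icc 0 1) S)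
    (hδ : MapsTo δ (Icc 0 1) S) : MapsTo φ (Icc 0 1) S := by
  intro t ht
  rcases le_total t (1 / 2) with hle | hge
  · rw [h.1 t ⟨ht.1, hle⟩]
    exact hγ ⟨by linarith [ht.1], by linarith⟩
  · rw [h.2 t ⟨hge, ht.2⟩]
    exact hδ ⟨by linarith, by linarith [ht.2]⟩

theorem exists_continuous_isConcat [TopologicalSpace Z] (hγ : ContinuousOn γ (Icc 0 1))
    (hδ : ContinuousOn δ (Icc 0 1)) (h : γ 1 = δ 0) :
    ∃ φ : ℝ → Z, Continuous φ ∧ IsConcat γ δ φ := by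
  let γ' : Path (γ 0) (γ 1) := Path.ofLine hγ rfl rfl
  let δ' : Path (γ 1) (δ 1) := Path.ofLine hδ h.symm rfl
  refine ⟨(γ'.trans δ').extend, (γ'.trans δ').continuous_extend, fun t ht ↦ ?_, fun t ht ↦ ?_⟩
  · rw [Path.extend_trans_of_le_half _ _ ht.2]
    exact Path.extend_apply _ ⟨by linarith [ht.1], by linarith [ht.2]⟩
  · rw [Path.extend_trans_of_half_le _ _ ht.1]
    exact Path.extend_apply _ ⟨by linarith [ht.1], by linarith [ht.2]⟩

end Concatenation

theorem mapsTo_uIcc_of_monotoneOn_or_antitoneOn {α β : Type*} [LinearOrder α] [LinearOrder β]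
    {u : α → β} {a b : α} (hab : a ≤ b)
    (hu : MonotoneOn u (Icc a b) ∨ AntitoneOn u (Icc a b)) :
    MapsTo u (Icc a b) (uIcc (u a) (u b)) := by
  rw [← uIcc_of_le hab] at hu ⊢
  exact hu.elim MonotoneOn.mapsTo_uIcc AntitoneOn.mapsTo_uIcc

theorem decoupled_monotone_plan_of_separated_general {X Y : Type*}
    [TopologicalSpace X] [TopologicalSpace Y] (f : X → ℝ) (g : Y → ℝ) {F : Set X} {G : Set Y}
    {p q : X × Y} {φA : ℝ → X} {φB : ℝ → Y} {r : ℝ} (hr : 0 < r)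
    (hp : r ≤ |f p.1 - g p.2|) (hq : r ≤ |f q.1 - g q.2|)
    (hsign : Real.sign (f p.1 - g p.2) = Real.sign (f q.1 - g q.2))
    (hAc : ContinuousOn φA (Icc 0 1)) (hA0 : φA 0 = p.1) (hA1 : φA 1 = q.1)
    (hAF : MapsTo φA (Icc 0 1) F) (hAf : ∀ t ∈ Icc 0 1, f (φA t) ∈ uIcc (f p.1) (f q.1))
    (hBc : ContinuousOn φB (Icc 0 1)) (hB0 : φB 0 = p.2) (hB1 : φB 1 = q.2)
    (hBG : MapsTo φB (Icc 0 1) G) (hBg : ∀ t ∈ Icc 0 1, g (φB t) ∈ uIcc (g p.2) (g q.2)) :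
    ∃ φ : ℝ → X × Y, Continuous φ ∧ φ 0 = p ∧ φ 1 = q ∧
      MapsTo φ (Icc 0 1) (F ×ˢ G ∩ {c | r ≤ |f c.1 - g c.2|}) ∧
      (IsConcat (fun t ↦ (φA t, p.2)) (fun t ↦ (q.1, φB t)) φ ∨
        IsConcat (fun t ↦ (p.1, φB t)) (fun t ↦ (φA t, q.2)) φ) := by
  have zero_mem : (0 : ℝ) ∈ Icc 0 1 := left_mem_Icc.mpr zero_le_one
  have one_mem : (1 : ℝ) ∈ Icc 0 1 := right_mem_Icc.mpr zero_le_one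
  obtain ⟨H, hH, hpH, hqH, hsep⟩ := exists_isHemispace_forall_le_abs_sub hr hp hq hsign
  simp only [← segment_eq_uIcc] at hAf hBg
  rcases hH.staircase_mem_or_staircase_mem hpH hqH with ⟨hA, hB⟩ | ⟨hB, hA⟩
  · obtain ⟨φ, hφ, hconcat⟩ := exists_continuous_isConcat
      (hAc.prodMk continuousOn_const) (continuousOn_const.prodMk hBc) (Prod.ext hA1 hB0.symm)
    refine ⟨φ, hφ, hconcat.apply_zero.trans (Prod.ext hA0 rfl),
      hconcat.apply_one.trans (Prod.ext rfl hB1), hconcat.mapsTo ?_ ?_, .inl hconcat⟩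
    · exact fun t ht ↦ ⟨⟨hAF ht, hB0 ▸ hBG zero_mem⟩, hsep _ (hA _ (hAf t ht))⟩
    · exact fun t ht ↦ ⟨⟨hA1 ▸ hAF one_mem, hBG ht⟩, hsep _ (hB _ (hBg t ht))⟩
  · obtain ⟨φ, hφ, hconcat⟩ := exists_continuous_isConcat
      (continuousOn_const.prodMk hBc) (hAc.prodMk continuousOn_const) (Prod.ext hA0.symm hB1)
    refine ⟨φ, hφ, hconcat.apply_zero.trans (Prod.ext rfl hB0),
      hconcat.apply_one.trans (Prod.ext hA1 rfl), hconcat.mapsTo ?_ ?_, .inr hconcat⟩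
    · exact fun t ht ↦ ⟨⟨hA0 ▸ hAF zero_mem, hBG ht⟩, hsep _ (hB _ (hBg t ht))⟩
    · exact fun t ht ↦ ⟨⟨hAF ht, hB1 ▸ hBG one_mem⟩, hsep _ (hA _ (hAf t ht))⟩

theorem IsPathIn.mem_uIcc_of_monotoneOn_or_antitoneOn {F : Set (ℝ × ℝ)} {u v : ℝ × ℝ}
    {γ : ℝ → ℝ × ℝ} (hγ : IsPathIn F u v γ) {f : ℝ × ℝ → ℝ}
    (hf : MonotoneOn (fun t ↦ f (γ t)) (Icc 0 1) ∨ AntitoneOn (fun t ↦ f (γ t)) (Icc 0 1)) :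
    ∀ t ∈ Icc 0 1, f (γ t) ∈ uIcc (f u) (f v) := by
  obtain ⟨-, rfl, rfl, -⟩ := hγ
  exact fun t ht ↦ mapsTo_uIcc_of_monotoneOn_or_antitoneOn zero_le_one hf ht

theorem XSep.one_le_linf {c : (ℝ × ℝ) × (ℝ × ℝ)} (hc : XSep c) : 1 ≤ linf (c.1 - c.2) :=
  le_max_of_le_left hc

theorem YSep.one_le_linf {c : (ℝ × ℝ) × (ℝ × ℝ)} (hc : YSep c) : 1 ≤ linf (c.1 - c.2) :=
  le_max_of_le_right hc

/-- Given two x-separated free configurations with the same x-order and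
x-monotone paths `φA`, `φB` in `F` for the two robots, there is a feasible plan moving one
robot along its path and then the other along its path (in one of the two orders) that is
x-separated throughout; and the analogous statement with the x-direction replaced
everywhere by the y-direction. -/
theorem decoupled_monotone_plan_of_separated
    (F : Set (ℝ × ℝ)) (p q : (ℝ × ℝ) × (ℝ × ℝ))
    (hp : FreeConf F p) (hq : FreeConf F q) :
    (∀ φA φB : ℝ → ℝ × ℝ,
      XSep p → XSep q → SameXOrder p q →
      IsPathIn F p.1 q.1 φA → XMonotone φA →
      IsPathIn F p.2 q.2 φB → XMonotone φB →
      ∃ φ : ℝ → (ℝ × ℝ) × (ℝ × ℝ),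
        ContinuousOn φ (Icc 0 1) ∧ φ 0 = p ∧ φ 1 = q ∧
        (∀ lam ∈ Icc (0 : ℝ) 1, FreeConf F (φ lam)) ∧
        (∀ lam ∈ Icc (0 : ℝ) 1, XSep (φ lam)) ∧
        (((∀ lam ∈ Icc (0 : ℝ) (1 / 2), φ lam = (φA (2 * lam), p.2)) ∧
            (∀ lam ∈ Icc (1 / 2 : ℝ) 1, φ lam = (q.1, φB (2 * lam - 1)))) ∨
          ((∀ lam ∈ Icc (0 : ℝ) (1 / 2), φ lam = (p.1, φB (2 * lam))) ∧
            (∀ lam ∈ Icc (1 / 2 : ℝ) 1, φ lam = (φA (2 * lam - 1), q.2))))) ∧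
    (∀ φA φB : ℝ → ℝ × ℝ,
      YSep p → YSep q → SameYOrder p q →
      IsPathIn F p.1 q.1 φA → YMonotone φA →
      IsPathIn F p.2 q.2 φB → YMonotone φB →
      ∃ φ : ℝ → (ℝ × ℝ) × (ℝ × ℝ),
        ContinuousOn φ (Icc 0 1) ∧ φ 0 = p ∧ φ 1 = q ∧
        (∀ lam ∈ Icc (0 : ℝ) 1, FreeConf F (φ lam)) ∧
        (∀ lam ∈ Icc (0 : ℝ) 1, YSep (φ lam)) ∧
        (((∀ lam ∈ Icc (0 : ℝ) (1 / 2), φ lam = (φA (2 * lam), p.2)) ∧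
            (∀ lam ∈ Icc (1 / 2 : ℝ) 1, φ lam = (q.1, φB (2 * lam - 1)))) ∨
          ((∀ lam ∈ Icc (0 : ℝ) (1 / 2), φ lam = (p.1, φB (2 * lam))) ∧
            (∀ lam ∈ Icc (1 / 2 : ℝ) 1, φ lam = (φA (2 * lam - 1), q.2))))) := by
  constructor
  · intro φA φB hpsep hqsep horder hA hAmono hB hBmono
    obtain ⟨φ, hφ, h0, h1, hmem, hconcat⟩ := decoupled_monotone_plan_of_separated_general
      Prod.fst Prod.fst one_pos hpsep hqsep horder
      hA.1 hA.2.1 hA.2.2.1 hA.2.2.2 (hA.mem_uIcc_of_monotoneOn_or_antitoneOn hAmono)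
      hB.1 hB.2.1 hB.2.2.1 hB.2.2.2 (hB.mem_uIcc_of_monotoneOn_or_antitoneOn hBmono)
    exact ⟨φ, hφ.continuousOn, h0, h1,
      fun t ht ↦ ⟨(hmem ht).1.1, (hmem ht).1.2, XSep.one_le_linf (hmem ht).2⟩,
      fun t ht ↦ (hmem ht).2, hconcat⟩
  · intro φA φB hpsep hqsep horder hA hAmono hB hBmono
    obtain ⟨φ, hφ, h0, h1, hmem, hconcat⟩ := decoupled_monotone_plan_of_separated_general
      Prod.snd Prod.snd one_pos hpsep hqsep horder
      hA.1 hA.2.1 hA.2.2.1 hA.2.2.2 (hA.mem_uIcc_of_monotoneOn_or_antitoneOn hAmono)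
      hB.1 hB.2.1 hB.2.2.1 hB.2.2.2 (hB.mem_uIcc_of_monotoneOn_or_antitoneOn hBmono)
    exact ⟨φ, hφ.continuousOn, h0, h1,
      fun t ht ↦ ⟨(hmem ht).1.1, (hmem ht).1.2, YSep.one_le_linf (hmem ht).2⟩,
      fun t ht ↦ (hmem ht).2, hconcat⟩

end
end

section
/- Let γ : [ν₁,ν₂] → ℝ² be a continuous path of finite ℓ₁-length and let y* ∈ ℝ. Define γ* : [ν₁,ν₂] → ℝ² by γ*(ν) := (γ(ν)₁, y*). If there exists ν ∈ [ν₁,ν₂] with γ(ν)₂ = y*, then the ℓ₁-length of γ* plus the total length |γ(ν₁)₂ − y*| + |γ(ν₂)₂ − y*| of the two vertical ghost segments is at most the ℓ₁-length of γ. -/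
open Set
open scoped ENNReal

noncomputable section

/-!
The `ℓ₁`-variation of a map into a product is the sum of the variations of its two coordinates:
on a finite set this holds term by term, and the variation on any set is the supremum of those on
its finite subsets, which are directed under union. Pushing a path to a horizontal line keeps its
horizontal variation and annihilates the vertical one; the latter is at least the sum of the ghost
lengths because the height runs from `γ(ν₁)₂` through `y*` to `γ(ν₂)₂`.
-/

section Variation

variable {α E F : Type*} [LinearOrder α] [PseudoEMetricSpace E] [PseudoEMetricSpace F]

theorem eVariationOn_insert_of_isGreatest (f : α → E) {s : Set α} {a b : α}
    (ha : IsGreatest s a) (hab : a ≤ b) :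
    eVariationOn f (insert b s) = eVariationOn f s + edist (f a) (f b) := by
  rw [← union_singleton, eVariationOn.union' f ha isLeast_singleton hab,
    eVariationOn.subsingleton f subsingleton_singleton, add_zero]

theorem eVariationOn_eq_iSup_finset (f : α → E) (s : Set α) :
    eVariationOn f s = ⨆ t : {t : Finset α // (t : Set α) ⊆ s}, eVariationOn f t := by
  refine le_antisymm (iSup_le ?_) (iSup_le fun t ↦ eVariationOn.mono f t.2)
  rintro ⟨n, u, hu, hus⟩
  let t : Finset α := (Finset.Iic n).image u
  have hts : (t : Set α) ⊆ s := by
    simpa [t, subset_def] using fun i _ ↦ hus i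
  refine le_iSup_of_le ⟨t, hts⟩ (eVariationOn.sum_le_of_monotoneOn_Iic (hu.monotoneOn _) ?_)
  exact fun i hi ↦ Finset.mem_coe.2 (Finset.mem_image_of_mem u (Finset.mem_Iic.2 hi))

theorem edist_add_edist_le_eVariationOn (f : α → E) {s : Set α} {a b c : α} (ha : a ∈ s)
    (hb : b ∈ s) (hc : c ∈ s) (hab : a ≤ b) (hbc : b ≤ c) :
    edist (f a) (f b) + edist (f b) (f c) ≤ eVariationOn f s := by
  have hle : ∀ x ∈ ({a, b} : Set α), ∀ y ∈ ({b, c} : Set α), x ≤ y := by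
    rintro x (rfl | rfl) y (rfl | rfl) <;> order
  calc edist (f a) (f b) + edist (f b) (f c)
      = eVariationOn f {a, b} + eVariationOn f {b, c} := by simp only [eVariationOn.pair]
    _ ≤ eVariationOn f ({a, b} ∪ {b, c}) := eVariationOn.add_le_union f hle
    _ ≤ eVariationOn f s := eVariationOn.mono f (by simp [insert_subset_iff, ha, hb, hc])

theorem edist_toLp_one (p q : E × F) :
    edist (WithLp.toLp 1 p) (WithLp.toLp 1 q) = edist p.1 q.1 + edist p.2 q.2 := by
  rw [WithLp.prod_edist_eq_add (by norm_num)]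
  simp

theorem eVariationOn_toLp_one_finset (γ : α → E × F) (t : Finset α) :
    eVariationOn (fun x ↦ WithLp.toLp 1 (γ x)) t =
      eVariationOn (fun x ↦ (γ x).1) t + eVariationOn (fun x ↦ (γ x).2) t := by
  induction t using Finset.induction_on_max with
  | empty => simp
  | insert b t hlt ih =>
    obtain rfl | ht := t.eq_empty_or_nonempty
    · simp
    have hmax : IsGreatest (t : Set α) (t.max' ht) := t.isGreatest_max' ht
    have hle : t.max' ht ≤ b := (hlt _ (t.max'_mem ht)).le
    simp only [Finset.coe_insert, eVariationOn_insert_of_isGreatest _ hmax hle, ih, edist_toLp_one]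
    ring

theorem eVariationOn_toLp_one (γ : α → E × F) (s : Set α) :
    eVariationOn (fun x ↦ WithLp.toLp 1 (γ x)) s =
      eVariationOn (fun x ↦ (γ x).1) s + eVariationOn (fun x ↦ (γ x).2) s := by
  simp only [eVariationOn_eq_iSup_finset _ s, eVariationOn_toLp_one_finset]
  refine (ENNReal.iSup_add_iSup fun t₁ t₂ ↦ ?_).symm
  have hunion : ((t₁.1 ∪ t₂.1 : Finset α) : Set α) ⊆ s := by
    simpa using ⟨t₁.2, t₂.2⟩
  refine ⟨⟨t₁ ∪ t₂, hunion⟩, add_le_add (eVariationOn.mono _ ?_) (eVariationOn.mono _ ?_)⟩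
  · exact Finset.coe_subset.2 Finset.subset_union_left
  · exact Finset.coe_subset.2 Finset.subset_union_right

theorem push_length_le_general (γ : α → E × F) {s : Set α} {a b c : α} (ha : a ∈ s)
    (hc : c ∈ s) (hb : b ∈ s) (hac : a ≤ c) (hcb : c ≤ b) :
    eVariationOn (fun x ↦ WithLp.toLp 1 ((γ x).1, (γ c).2)) s +
        (edist (γ a).2 (γ c).2 + edist (γ b).2 (γ c).2) ≤
      eVariationOn (fun x ↦ WithLp.toLp 1 (γ x)) s := by
  have hvert_const : eVariationOn (fun _ ↦ (γ c).2) s = 0 :=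
    (eVariationOn.eq_zero_iff _).2 fun _ _ _ _ ↦ edist_self _
  have hghost : edist (γ a).2 (γ c).2 + edist (γ b).2 (γ c).2 ≤
      eVariationOn (fun x ↦ (γ x).2) s := by
    rw [edist_comm (γ b).2]
    exact edist_add_edist_le_eVariationOn (fun x ↦ (γ x).2) ha hc hb hac hcb
  rw [eVariationOn_toLp_one, eVariationOn_toLp_one γ, hvert_const, add_zero]
  gcongr

end Variation

/-- Pushing a path of finite ℓ₁-length onto a horizontal line through a
height it attains does not increase its ℓ₁-length, even after accounting for the two
vertical ghost segments. -/
theorem push_length_le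
    (ν₁ ν₂ : ℝ) (hle : ν₁ ≤ ν₂) (γ : ℝ → ℝ × ℝ)
    (hcont : ContinuousOn γ (Icc ν₁ ν₂))
    (hfin : l1VarOn γ (Icc ν₁ ν₂) ≠ ⊤)
    (ystar : ℝ) (hhit : ∃ ν ∈ Icc ν₁ ν₂, (γ ν).2 = ystar) :
    l1VarOn (fun t => ((γ t).1, ystar)) (Icc ν₁ ν₂) +
        ENNReal.ofReal (|(γ ν₁).2 - ystar| + |(γ ν₂).2 - ystar|) ≤
      l1VarOn γ (Icc ν₁ ν₂) := by
  obtain ⟨c, hc, rfl⟩ := hhit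
  simpa only [l1VarOn, WithLp.equiv_symm_apply, edist_dist, Real.dist_eq,
      ENNReal.ofReal_add (abs_nonneg _) (abs_nonneg _)] using
    push_length_le_general γ (left_mem_Icc.2 hle) hc (right_mem_Icc.2 hle) hc.1 hc.2

end
end
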